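/- Let G be a finitely generated group with finite generating set X, let L be a language over a finite alphabet, and let t : ℕ → ℕ. If for every constant C > 0 the function n ↦ g_G^X(C·t(n)) is o(U_L(n)) (its ratio to U_L(n) tends to 0 as n → ∞), then L is not recognized by any weakly t(n) time-bounded G-automaton, i.e., L ∉ 𝔏(G)^w_{t(n)}. -/

import Mathlib

/-- A `G`-automaton over input alphabet `α`: a nondeterministic finite automaton
equipped with a register holding an element of the group `G`. -/
structure GAutomaton (α : Type*) (G : Type*) [Group G] where
  /-- the (finite) state set -/
  Q : Type
  finQ : Finite Q
  /-- the initial state -/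
  q0 : Q
  /-- the accepting states -/
  acc : Set Q
  /-- the (finite) transition relation; `none` stands for ε -/
  δ : Set (Q × Option α × Q × G)
  finδ : δ.Finite

namespace GAutomaton

variable {α : Type*} {G : Type*} [Group G]

/-- One computation step between configurations `(state, register, remaining input)`. -/
def Step (M : GAutomaton α G) (c c' : M.Q × G × List α) : Prop :=
  ∃ σ m, (c.1, σ, c'.1, m) ∈ M.δ ∧ c'.2.1 = c.2.1 * m ∧
    match σ with
    | none => c'.2.2 = c.2.2
    | some s => c.2.2 = s :: c'.2.2

/-- `M.StepsIn k c c'` : configuration `c'` is reachable from `c` in exactly `k` steps. -/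
def StepsIn (M : GAutomaton α G) : ℕ → (M.Q × G × List α) → (M.Q × G × List α) → Prop
  | 0, c, c' => c = c'
  | n + 1, c, c' => ∃ d, M.Step c d ∧ M.StepsIn n d c'

/-- `M` accepts the word `w` within `t` computation steps. -/
def AcceptsIn (M : GAutomaton α G) (w : List α) (t : ℕ) : Prop :=
  ∃ k ≤ t, ∃ q ∈ M.acc, M.StepsIn k (M.q0, 1, w) (q, 1, [])

/-- The language recognized by `M`. -/
def lang (M : GAutomaton α G) : Language α := {w | ∃ t, M.AcceptsIn w t}

/-- `M` is real-time if every transition consumes an input symbol. -/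
def RealTime (M : GAutomaton α G) : Prop := ∀ tr ∈ M.δ, tr.2.1 ≠ none

end GAutomaton

/-- `L ∈ 𝔏(G)` : the language `L` is recognized by some `G`-automaton. -/
def GRecognizable (G : Type*) [Group G] {α : Type*} (L : Language α) : Prop :=
  ∃ M : GAutomaton α G, M.lang = L

/-- `L ∈ 𝔏(G)ʷ_{t(n)}` : `L` is recognized by a weakly `t(n)` time-bounded `G`-automaton. -/
def GRecognizableInTime (G : Type*) [Group G] {α : Type*} (L : Language α) (t : ℕ → ℕ) : Prop :=
  ∃ M : GAutomaton α G, M.lang = L ∧ ∀ w ∈ L, M.AcceptsIn w (t w.length)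

/-- `L ∈ 𝔏(G)ʷ_{O(n)}` : `L` is recognized by a weakly linear-time bounded `G`-automaton. -/
def GRecognizableLinTime (G : Type*) [Group G] {α : Type*} (L : Language α) : Prop :=
  ∃ C : ℕ, GRecognizableInTime G L (fun n => C * n + C)

/-- `S` is a set of pairwise `n`-dissimilar strings for `L`: all members have length
`≤ n`, and any two distinct members are `n`-dissimilar. -/
def PairwiseDissimilar {α : Type*} (L : Language α) (n : ℕ) (S : Finset (List α)) : Prop :=
  (∀ w ∈ S, w.length ≤ n) ∧
    ∀ w ∈ S, ∀ w' ∈ S, w ≠ w' →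
      ∃ v : List α, (w ++ v).length ≤ n ∧ (w' ++ v).length ≤ n ∧
        ((w ++ v) ∈ L ↔ (w' ++ v) ∉ L)

/-- `A_L(n)` : the maximum cardinality of a set of pairwise `n`-dissimilar strings. -/
noncomputable def dissimA {α : Type*} (L : Language α) (n : ℕ) : ℕ :=
  sSup {k | ∃ S : Finset (List α), PairwiseDissimilar L n S ∧ S.card = k}

/-- `S` is a uniformly `n`-dissimilar set of strings for `L`. -/
def UniformlyDissimilar {α : Type*} (L : Language α) (n : ℕ) (S : Finset (List α)) : Prop :=
  ∀ w ∈ S, ∃ v : List α, (w ++ v).length ≤ n ∧ (w ++ v) ∈ L ∧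
    ∀ w' ∈ S, w' ≠ w → (w' ++ v).length ≤ n ∧ (w' ++ v) ∉ L

/-- `U_L(n)` : the maximum cardinality of a uniformly `n`-dissimilar set for `L`. -/
noncomputable def dissimU {α : Type*} (L : Language α) (n : ℕ) : ℕ :=
  sSup {k | ∃ S : Finset (List α), UniformlyDissimilar L n S ∧ S.card = k}

/-- Evaluation in `G` of a word over the alphabet `X ∪ X⁻¹`, encoded as `↥X × Bool`
(`(x, false)` stands for the generator `x` and `(x, true)` for its inverse `x⁻¹`). -/
def wordEval {G : Type*} [Group G] (X : Finset G) (w : List (↥X × Bool)) : G :=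
  (w.map fun p => if p.2 then (p.1 : G)⁻¹ else (p.1 : G)).prod

/-- The word problem language `W(G,X)` over the alphabet `X ∪ X⁻¹`: all words whose
product in `G` is the identity. -/
def wordProblem {G : Type*} [Group G] (X : Finset G) : Language (↥X × Bool) :=
  {w | wordEval X w = 1}

/-- The growth function `g_G^X(n)` of `G` with respect to `X`: the number of group
elements of word length at most `n`. -/
noncomputable def growthFn {G : Type*} [Group G] (X : Finset G) (n : ℕ) : ℕ :=
  Nat.card {g : G // ∃ w : List (↥X × Bool), w.length ≤ n ∧ wordEval X w = g}

namespace GAutomaton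

variable {α : Type*} {G : Type*} [Group G] {M : GAutomaton α G}

lemma Step.append {c c' : M.Q × G × List α} (h : M.Step c c') (v : List α) :
    M.Step (c.1, c.2.1, c.2.2 ++ v) (c'.1, c'.2.1, c'.2.2 ++ v) := by
  obtain ⟨σ, m, hδ, hm, hσ⟩ := h
  refine ⟨σ, m, hδ, hm, ?_⟩
  cases σ <;> simp_all

lemma StepsIn.append {k : ℕ} {c c' : M.Q × G × List α} (h : M.StepsIn k c c') (v : List α) :
    M.StepsIn k (c.1, c.2.1, c.2.2 ++ v) (c'.1, c'.2.1, c'.2.2 ++ v) := by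
  induction k generalizing c with
  | zero => cases h; rfl
  | succ k ih =>
    obtain ⟨d, hd, h⟩ := h
    exact ⟨_, hd.append v, ih h⟩

lemma StepsIn.trans {k l : ℕ} {c d e : M.Q × G × List α} (h : M.StepsIn k c d)
    (h' : M.StepsIn l d e) : M.StepsIn (k + l) c e := by
  induction k generalizing c with
  | zero => cases h; simpa using h'
  | succ k ih =>
    obtain ⟨b, hb, h⟩ := h
    rw [Nat.succ_add]
    exact ⟨b, hb, ih h⟩

/-- A computation reading `w ++ v` passes through a configuration where exactly `w` is read. -/
lemma StepsIn.split {k : ℕ} {q q' : M.Q} {x y : G} {w v : List α}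
    (h : M.StepsIn k (q, x, w ++ v) (q', y, [])) :
    ∃ k₁ ≤ k, ∃ k₂ p z, M.StepsIn k₁ (q, x, w) (p, z, []) ∧
      M.StepsIn k₂ (p, z, v) (q', y, []) := by
  induction k generalizing q x w with
  | zero =>
    obtain ⟨rfl, rfl, hw⟩ : q = q' ∧ x = y ∧ w ++ v = [] := by simpa [StepsIn] using h
    obtain ⟨rfl, rfl⟩ := List.append_eq_nil_iff.1 hw
    exact ⟨0, le_rfl, 0, q, x, rfl, rfl⟩
  | succ k ih =>
    rcases w with _ | ⟨a, w⟩
    · exact ⟨0, Nat.zero_le _, k + 1, q, x, rfl, h⟩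
    · obtain ⟨⟨p, z, u⟩, ⟨σ, m, hδ, hm, hσ⟩, h⟩ := h
      cases σ with
      | none =>
        dsimp only at hσ
        subst hσ
        obtain ⟨k₁, hk, k₂, p', z', h₁, h₂⟩ := ih h
        exact ⟨k₁ + 1, by omega, k₂, p', z', ⟨(p, z, a :: w), ⟨none, m, hδ, hm, rfl⟩, h₁⟩, h₂⟩
      | some s =>
        simp only [List.cons_append, List.cons.injEq] at hσ
        obtain ⟨rfl, rfl⟩ := hσ
        obtain ⟨k₁, hk, k₂, p', z', h₁, h₂⟩ := ih h
        exact ⟨k₁ + 1, by omega, k₂, p', z', ⟨(p, z, w), ⟨some a, m, hδ, hm, rfl⟩, h₁⟩, h₂⟩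

end GAutomaton

section Growth

variable {G : Type*} [Group G] {X : Finset G}

/-- The ball of radius `n` around the identity in the word metric of `X`. -/
def wordBall (X : Finset G) (n : ℕ) : Set G :=
  {g | ∃ w : List (↥X × Bool), w.length ≤ n ∧ wordEval X w = g}

lemma wordBall_finite (X : Finset G) (n : ℕ) : (wordBall X n).Finite :=
  (List.finite_length_le (↥X × Bool) n).image (wordEval X)

lemma one_mem_wordBall (X : Finset G) (n : ℕ) : 1 ∈ wordBall X n :=
  ⟨[], by simp, by simp [wordEval]⟩

lemma wordBall_mono {m n : ℕ} (h : m ≤ n) : wordBall X m ⊆ wordBall X n :=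
  fun _ ⟨w, hw, he⟩ => ⟨w, hw.trans h, he⟩

lemma mul_mem_wordBall {m n : ℕ} {x y : G} (hx : x ∈ wordBall X m) (hy : y ∈ wordBall X n) :
    x * y ∈ wordBall X (m + n) := by
  obtain ⟨u, hu, rfl⟩ := hx
  obtain ⟨v, hv, rfl⟩ := hy
  exact ⟨u ++ v, by simpa using add_le_add hu hv, by simp [wordEval]⟩

lemma inv_mem_wordBall {n : ℕ} {x : G} (hx : x ∈ wordBall X n) : x⁻¹ ∈ wordBall X n := by
  obtain ⟨u, hu, rfl⟩ := hx
  refine ⟨(u.map fun p => (p.1, !p.2)).reverse, by simpa using hu, ?_⟩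
  simp only [wordEval, List.prod_inv_reverse, List.map_reverse, List.map_map]
  congr 3
  ext ⟨p, b⟩
  cases b <;> simp

lemma growthFn_eq_ncard (X : Finset G) (n : ℕ) : growthFn X n = (wordBall X n).ncard := rfl

lemma one_le_growthFn (X : Finset G) (n : ℕ) : 1 ≤ growthFn X n := by
  rw [growthFn_eq_ncard]
  exact (Set.ncard_pos (wordBall_finite X n)).2 ⟨1, one_mem_wordBall X n⟩

lemma exists_mem_wordBall (hX : Subgroup.closure (X : Set G) = ⊤) (g : G) :
    ∃ n, g ∈ wordBall X n := by
  have hg : g ∈ Subgroup.closure (X : Set G) := hX ▸ Subgroup.mem_top g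
  induction hg using Subgroup.closure_induction with
  | mem x hx => exact ⟨1, [(⟨x, hx⟩, false)], by simp, by simp [wordEval]⟩
  | one => exact ⟨0, one_mem_wordBall X 0⟩
  | mul x y _ _ hx hy =>
    obtain ⟨m, hm⟩ := hx
    obtain ⟨n, hn⟩ := hy
    exact ⟨m + n, mul_mem_wordBall hm hn⟩
  | inv x _ hx =>
    obtain ⟨m, hm⟩ := hx
    exact ⟨m, inv_mem_wordBall hm⟩

end Growth

section Bound

variable {α : Type*} {G : Type*} [Group G] {X : Finset G} {M : GAutomaton α G}

/-- The register multipliers of an automaton lie in a common ball. -/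
lemma GAutomaton.exists_wordBall (M : GAutomaton α G)
    (hX : Subgroup.closure (X : Set G) = ⊤) :
    ∃ C, 0 < C ∧ ∀ tr ∈ M.δ, tr.2.2.2 ∈ wordBall X C := by
  choose f hf using exists_mem_wordBall hX
  obtain ⟨B, hB⟩ := (M.finδ.image fun tr => f tr.2.2.2).bddAbove
  refine ⟨B + 1, B.succ_pos, fun tr htr => wordBall_mono ?_ (hf _)⟩
  exact (hB (Set.mem_image_of_mem _ htr)).trans B.le_succ

lemma GAutomaton.StepsIn.register_mem {C k : ℕ}
    (hC : ∀ tr ∈ M.δ, tr.2.2.2 ∈ wordBall X C) {c c' : M.Q × G × List α}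
    (h : M.StepsIn k c c') : c.2.1⁻¹ * c'.2.1 ∈ wordBall X (C * k) := by
  induction k generalizing c with
  | zero => cases h; simpa using one_mem_wordBall X 0
  | succ k ih =>
    obtain ⟨d, ⟨σ, m, hδ, hm, -⟩, h⟩ := h
    have := mul_mem_wordBall (hC _ hδ) (ih h)
    rw [hm] at this
    rw [Nat.mul_succ, add_comm]
    simpa [mul_assoc] using this

lemma UniformlyDissimilar.card_le {C n T : ℕ} {S : Finset (List α)}
    (hC : ∀ tr ∈ M.δ, tr.2.2.2 ∈ wordBall X C)
    (hT : ∀ w ∈ M.lang, w.length ≤ n → M.AcceptsIn w T)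
    (hS : UniformlyDissimilar M.lang n S) :
    S.card ≤ Nat.card M.Q * growthFn X (C * T) := by
  have := M.finQ
  have key : ∀ w : S, ∃ c : M.Q × G, c.2 ∈ wordBall X (C * T) ∧
      (∃ k, M.StepsIn k (M.q0, 1, (w : List α)) (c.1, c.2, [])) ∧
      ∀ w' ∈ S, (∃ k, M.StepsIn k (M.q0, 1, w') (c.1, c.2, [])) → w' = w := by
    rintro ⟨w, hw⟩
    obtain ⟨v, hv, hvL, hdis⟩ := hS w hw
    obtain ⟨k, hk, q, hq, hsteps⟩ := hT _ hvL hv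
    obtain ⟨k₁, hk₁, k₂, p, z, h₁, h₂⟩ := hsteps.split
    refine ⟨(p, z), ?_, ⟨k₁, h₁⟩, ?_⟩
    · exact wordBall_mono (Nat.mul_le_mul_left C (hk₁.trans hk))
        (by simpa using h₁.register_mem hC)
    · rintro w' hw' ⟨k', h'⟩
      by_contra hne
      exact (hdis w' hw' hne).2 ⟨k' + k₂, _, le_rfl, q, hq, (h'.append v).trans h₂⟩
  choose f hball hreach huniq using key
  have hinj : Function.Injective fun w => ((f w).1, (⟨(f w).2, hball w⟩ : wordBall X (C * T))) := by
    intro w w' hww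
    simp only [Prod.mk.injEq, Subtype.mk.injEq] at hww
    have hf : f w = f w' := Prod.ext hww.1 hww.2
    exact Subtype.ext (huniq w' w w.2 (hf ▸ hreach w))
  have := (wordBall_finite X (C * T)).to_subtype
  have hcard := Nat.card_le_card_of_injective _ hinj
  rwa [Nat.card_prod, Nat.card_eq_fintype_card (α := S), Fintype.card_coe] at hcard

lemma dissimU_le {C n T : ℕ} (hC : ∀ tr ∈ M.δ, tr.2.2.2 ∈ wordBall X C)
    (hT : ∀ w ∈ M.lang, w.length ≤ n → M.AcceptsIn w T) :
    dissimU M.lang n ≤ Nat.card M.Q * growthFn X (C * T) := by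
  refine csSup_le' ?_
  rintro _ ⟨S, hS, rfl⟩
  exact hS.card_le hC hT

end Bound

/-- An unbounded sequence attains a running maximum at arbitrarily late times. -/
lemma exists_running_max {t : ℕ → ℕ} (ht : ¬ BddAbove (Set.range t)) (N : ℕ) :
    ∃ n ≥ N, ∀ m ≤ n, t m ≤ t n := by
  obtain ⟨A, hA⟩ := ((Set.finite_Iic N).image t).bddAbove
  have hex : ∃ n, A < t n := by
    by_contra! hle
    exact ht ⟨A, by rintro _ ⟨n, rfl⟩; exact hle n⟩
  classical
  refine ⟨Nat.find hex, ?_, fun m hm => ?_⟩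
  · by_contra! hlt
    exact (Nat.find_spec hex).not_ge (hA (Set.mem_image_of_mem t (Set.mem_Iic.2 hlt.le)))
  · rcases hm.lt_or_eq with hm | rfl
    · exact (not_lt.1 (Nat.find_min hex hm)).trans (Nat.find_spec hex).le
    · exact le_rfl

open Filter Asymptotics in
/-- If `G` is finitely generated with generating set `X` and, for every
constant `C > 0`, `g_G^X(C·t(n)) ∈ o(U_L(n))`, then `L` is not recognized by any weakly
`t(n)` time-bounded `G`-automaton. -/
theorem not_recognizable_of_growth_littleO {G : Type*} [Group G] (X : Finset G)
    (hX : Subgroup.closure (X : Set G) = ⊤)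
    {α : Type*} [Fintype α] (L : Language α) (t : ℕ → ℕ)
    (h : ∀ C : ℕ, 0 < C →
      (fun n : ℕ => (growthFn X (C * t n) : ℝ)) =o[atTop]
        fun n : ℕ => (dissimU L n : ℝ)) :
    ¬ GRecognizableInTime G L t := by
  rintro ⟨M, rfl, hM⟩
  obtain ⟨C, hC₀, hC⟩ := M.exists_wordBall hX
  have := M.finQ
  have hev (K : ℕ) : ∀ᶠ n in atTop, (K + 1) * growthFn X (C * t n) ≤ dissimU M.lang n := by
    filter_upwards [(h C hC₀).def (c := ((K : ℝ) + 1)⁻¹) (by positivity)] with n hn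
    rw [Real.norm_natCast, Real.norm_natCast, le_inv_mul_iff₀ (by positivity)] at hn
    exact_mod_cast hn
  have hle {n T : ℕ} (hT : ∀ m ≤ n, t m ≤ T) :
      dissimU M.lang n ≤ Nat.card M.Q * growthFn X (C * T) := by
    refine dissimU_le hC fun w hw hn => ?_
    obtain ⟨k, hk, hacc⟩ := hM w hw
    exact ⟨k, hk.trans (hT _ hn), hacc⟩
  by_cases ht : BddAbove (Set.range t)
  · obtain ⟨T, hT⟩ := ht
    obtain ⟨n, hn⟩ := (hev (Nat.card M.Q * growthFn X (C * T))).exists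
    have := hle (n := n) fun m _ => hT (Set.mem_range_self m)
    have := one_le_growthFn X (C * t n)
    nlinarith
  · obtain ⟨N, hN⟩ := eventually_atTop.1 (hev (Nat.card M.Q))
    obtain ⟨n, hn, hmax⟩ := exists_running_max ht N
    have := hle hmax
    have := hN n hn
    have := one_le_growthFn X (C * t n)
    nlinarith
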